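/- Let R be a unital associative and commutative ring, let A be a unital associative R-algebra generated (as a unital R-algebra) by a set X, and let S ⊆ A. Let M = { x_1 ⋯ x_k | k ≥ 0, x_i ∈ X } be the set of all finite products of elements of X (including the empty product 1). Let I be the two-sided ideal of A generated by the following elements, where s ranges over S and x_1, x_2, x_3, x_4, x_5 range over X: [s, x_1, x_2]; s[x_1, x_2, x_3]; [s, x_1][x_2, x_3, x_4]; [s, x_1][x_2, x_3] + [s, x_2][x_1, x_3]; and s([x_1, x_2][x_3, x_4] + [x_1, x_3][x_2, x_4]). Then for all s ∈ S, all d_1, d_2 ∈ M, and all x ∈ X, the element s·[d_1, d_2, x] belongs to I. -/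

import Mathlib

/-!
Fix `s ∈ S`. Modulo `I` every `[s, x]` with `x ∈ X` commutes with `X`, hence is central, and
`[s, a]` for arbitrary `a` is a combination of the `[s, x]`. So an element `t` satisfies
`s * a * t ∈ I` for all `a` as soon as `s * t ∈ I` and `[s, x] * t ∈ I` for all `x ∈ X`
(`mul_mul_eq_zero_of_gen`). The set `J` of the elements `t` with `s * A * t ⊆ I` is a two-sided
ideal, and it contains all `[x₁, x₂, x₃]` and all `[x₁, x₂][x₃, x₄] + [x₁, x₃][x₂, x₄]`: for the
latter, `[s, x][y, z]` is alternating modulo `I` and `[s, x]` is central, whence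
`[s, x]([x₁, x₂][x₃, x₄] + [x₁, x₃][x₂, x₄]) ∈ I` (`cm_mul_alternating`).

It remains to see that in `A / J`, whose generators satisfy these two families of relations, the
commutator `[d₁, d₂]` of two monomials commutes with each generator (`cm_cm_eq_zero`). This is an
induction on the lengths of `d₁` and `d₂`, based on `[a, ·]` and `[·, a]` being derivations.
-/

/-- The commutator `[a, b] = a * b - b * a`. -/
def cm {A : Type*} [Ring A] (a b : A) : A := a * b - b * a

section Monomials

variable {B : Type*} [Ring B] {Y : Set B}

lemma commute_of_cm_eq_zero {c : B} (hc : ∀ y ∈ Y, cm c y = 0) {d : B}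
    (hd : d ∈ Submonoid.closure Y) : c * d = d * c := by
  induction hd using Submonoid.closure_induction with
  | mem y hy => exact sub_eq_zero.mp (hc y hy)
  | one => simp
  | mul a b _ _ ha hb => rw [← mul_assoc, ha, mul_assoc, hb, mul_assoc]

/-- `[a, y][z, w]` is antisymmetric in `y, z` also for monomials `a`: the expression is a derivation
in `a`, because `[z, w]` and `[y, w]` commute with monomials. -/
lemma cm_mul_cm_add_of_mem (h1 : ∀ x ∈ Y, ∀ y ∈ Y, ∀ z ∈ Y, cm (cm x y) z = 0)
    (h2 : ∀ x ∈ Y, ∀ y ∈ Y, ∀ z ∈ Y, ∀ w ∈ Y, cm x y * cm z w + cm x z * cm y w = 0)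
    {a : B} (ha : a ∈ Submonoid.closure Y) {y z w : B} (hy : y ∈ Y) (hz : z ∈ Y) (hw : w ∈ Y) :
    cm a y * cm z w + cm a z * cm y w = 0 := by
  induction ha using Submonoid.closure_induction with
  | mem x hx => exact h2 x hx y hy z hz w hw
  | one => simp [cm]
  | mul a b _ hb iha ihb =>
    have e1 := commute_of_cm_eq_zero (h1 z hz w hw) hb
    have e2 := commute_of_cm_eq_zero (h1 y hy w hw) hb
    have key : ∀ p q : B, cm (a * b) y * p + cm (a * b) z * q =
        a * (cm b y * p + cm b z * q) + (cm a y * p + cm a z * q) * b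
          - cm a y * (p * b - b * p) - cm a z * (q * b - b * q) := by
      intro p q; unfold cm; noncomm_ring
    rw [key, iha, ihb, e1, e2]; simp

/-- A commutator of a monomial with a generator commutes with the generators. -/
lemma cm_gen_cm_eq_zero (h1 : ∀ x ∈ Y, ∀ y ∈ Y, ∀ z ∈ Y, cm (cm x y) z = 0)
    (h2 : ∀ x ∈ Y, ∀ y ∈ Y, ∀ z ∈ Y, ∀ w ∈ Y, cm x y * cm z w + cm x z * cm y w = 0)
    {a : B} (ha : a ∈ Submonoid.closure Y) {x y : B} (hx : x ∈ Y) (hy : y ∈ Y) :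
    cm (cm a x) y = 0 := by
  induction ha using Submonoid.closure_induction_left with
  | one => simp [cm]
  | mul_left z hz c hc ih =>
    -- The cross terms `[z, y][c, x] + [z, x][c, y]` cancel: the relation for `c` is used twice,
    -- in the arrangements `(x, z, y)` and `(y, z, x)`.
    have e1 := commute_of_cm_eq_zero (h1 z hz y hy) hc
    have e2 := commute_of_cm_eq_zero (h1 z hz y hy) (Submonoid.subset_closure hx)
    have e3 := commute_of_cm_eq_zero (h1 z hz x hx) hc
    have e4 := commute_of_cm_eq_zero (h1 z hz x hx) (Submonoid.subset_closure hy)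
    have f1 := cm_mul_cm_add_of_mem h1 h2 hc hx hz hy
    have f2 := cm_mul_cm_add_of_mem h1 h2 hc hy hz hx
    have e5 : cm z y * cm c x = cm c x * cm z y := by
      unfold cm at e1 e2 ⊢
      exact (Commute.sub_right (Commute.mul_right e1 e2) (Commute.mul_right e2 e1))
    have e7 := h1 z hz x hx y hy
    have key : cm (cm (z * c) x) y =
        z * cm (cm c x) y + cm z y * cm c x + cm z x * cm c y + cm (cm z x) y * c := by
      unfold cm; noncomm_ring
    have e6 : cm z x * cm c y = cm c y * cm z x := by
      unfold cm at e3 e4 ⊢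
      exact (Commute.sub_right (Commute.mul_right e3 e4) (Commute.mul_right e4 e3))
    have e8 : cm y x = - cm x y := by unfold cm; noncomm_ring
    rw [key, ih, e7, e5, e6]
    rw [e8] at f2
    linear_combination (norm := noncomm_ring) f1 + f2

/-- `[a, d][z, y]` is antisymmetric in `d, z` for monomials `a, d`: the expression is a derivation
in `d`, because `[a, z]` and `[z, y]` commute with monomials. -/
lemma cm_mul_cm_add_of_mem_of_mem (h1 : ∀ x ∈ Y, ∀ y ∈ Y, ∀ z ∈ Y, cm (cm x y) z = 0)
    (h2 : ∀ x ∈ Y, ∀ y ∈ Y, ∀ z ∈ Y, ∀ w ∈ Y, cm x y * cm z w + cm x z * cm y w = 0)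
    {a d : B} (ha : a ∈ Submonoid.closure Y) (hd : d ∈ Submonoid.closure Y)
    {z y : B} (hz : z ∈ Y) (hy : y ∈ Y) :
    cm a d * cm z y + cm a z * cm d y = 0 := by
  induction hd using Submonoid.closure_induction with
  | mem x hx => exact cm_mul_cm_add_of_mem h1 h2 ha hx hz hy
  | one => simp [cm]
  | mul b c hb hc ihb ihc =>
    have e1 := commute_of_cm_eq_zero (h1 z hz y hy) hc
    have e2 := commute_of_cm_eq_zero (fun w hw => cm_gen_cm_eq_zero h1 h2 ha hz hw) hb
    have key : ∀ p q : B, cm a (b * c) * p + q * cm (b * c) y =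
        b * (cm a c * p + q * cm c y) + (cm a b * p + q * cm b y) * c
          - cm a b * (p * c - c * p) + (q * b - b * q) * cm c y := by
      intro p q; unfold cm; noncomm_ring
    rw [key, ihb, ihc, e1, e2]; simp

/-- If the commutators of generators commute with the generators and `[x, y][z, w]` is
antisymmetric in `y, z`, then the commutator of two monomials commutes with the generators. -/
lemma cm_cm_eq_zero (h1 : ∀ x ∈ Y, ∀ y ∈ Y, ∀ z ∈ Y, cm (cm x y) z = 0)
    (h2 : ∀ x ∈ Y, ∀ y ∈ Y, ∀ z ∈ Y, ∀ w ∈ Y, cm x y * cm z w + cm x z * cm y w = 0)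
    {a d : B} (ha : a ∈ Submonoid.closure Y) (hd : d ∈ Submonoid.closure Y)
    {y : B} (hy : y ∈ Y) : cm (cm a d) y = 0 := by
  induction hd using Submonoid.closure_induction_left with
  | one => simp [cm]
  | mul_left z hz c hc ih =>
    have e1 := commute_of_cm_eq_zero (h1 z hz y hy) ha
    have e2 := commute_of_cm_eq_zero (h1 z hz y hy) hc
    have e3 : cm z y * cm a c = cm a c * cm z y := by
      unfold cm at e1 e2 ⊢
      exact (Commute.sub_right (Commute.mul_right e1 e2) (Commute.mul_right e2 e1))
    have key : cm (cm a (z * c)) y =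
        z * cm (cm a c) y + cm z y * cm a c + cm a z * cm c y + cm (cm a z) y * c := by
      unfold cm; noncomm_ring
    rw [key, ih, cm_gen_cm_eq_zero h1 h2 ha hz hy, e3]
    simpa using cm_mul_cm_add_of_mem_of_mem h1 h2 ha hc hz hy

end Monomials

section Modulo

variable {R A C : Type*} [CommRing R] [Ring A] [Algebra R A] [Ring C] {X : Set A}

lemma map_cm (f : A →+* C) (a b : A) : f (cm a b) = cm (f a) (f b) := by simp [cm]

/-- If `f c` commutes with the image of the generators, it commutes with the image of `f`. -/
lemma map_commute_of_adjoin (hX : Algebra.adjoin R X = ⊤) (f : A →+* C) {c : A}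
    (hc : ∀ x ∈ X, f (cm c x) = 0) (a : A) : f c * f a = f a * f c := by
  have ha : a ∈ Algebra.adjoin R X := hX ▸ Algebra.mem_top
  induction ha using Algebra.adjoin_induction with
  | mem x hx => exact sub_eq_zero.mp (by simpa [cm] using hc x hx)
  | algebraMap r => rw [← map_mul, ← map_mul, Algebra.commutes]
  | add a b _ _ iha ihb => rw [map_add, mul_add, add_mul, iha, ihb]
  | mul a b _ _ iha ihb => rw [map_mul, ← mul_assoc, iha, mul_assoc, ihb, mul_assoc]

/-- Write `s * a * t = a * (s * t) + [s, a] * t`. The second term vanishes under `f` since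
`[s, ·]` is a derivation and each `f [s, x]` commutes with the image of `f`; for the induction on
`a`, a factor `b` has to be allowed between `[s, a]` and `t`. -/
lemma mul_mul_eq_zero_of_gen (hX : Algebra.adjoin R X = ⊤) (f : A →+* C) {s t : A}
    (hs : ∀ x ∈ X, ∀ y ∈ X, f (cm (cm s x) y) = 0) (ht : f (s * t) = 0)
    (hxt : ∀ x ∈ X, f (cm s x * t) = 0) (a : A) : f (s * a * t) = 0 := by
  have main : ∀ b, f (cm s a * b * t) = 0 := by
    have ha : a ∈ Algebra.adjoin R X := hX ▸ Algebra.mem_top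
    induction ha using Algebra.adjoin_induction with
    | mem x hx =>
      intro b
      have h := map_commute_of_adjoin hX f (hs x hx) b
      rw [map_mul, map_mul, h, mul_assoc, ← map_mul f _ t, hxt x hx, mul_zero]
    | algebraMap r =>
      intro b
      rw [cm, ← Algebra.commutes, sub_self]; simp
    | add a b _ _ iha ihb =>
      intro c
      have e : cm s (a + b) * c * t = cm s a * c * t + cm s b * c * t := by
        unfold cm; noncomm_ring
      rw [e, map_add, iha, ihb, add_zero]
    | mul a b _ _ iha ihb =>
      intro c
      have e : cm s (a * b) * c * t = a * (cm s b * c * t) + cm s a * (b * c) * t := by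
        unfold cm; noncomm_ring
      rw [e, map_add, map_mul, iha, ihb, mul_zero, add_zero]
  have e : s * a * t = a * (s * t) + cm s a * 1 * t := by unfold cm; noncomm_ring
  rw [e, map_add, map_mul, ht, main, mul_zero, add_zero]

/-- For `u x = [s, x]`: the expression `u x * [y, z]` is alternating in `x, y, z`, so
`u x * [x₁, x₂] * [x₃, x₄]` can be rotated to `[x, x₁] * (u x₂ * [x₃, x₄])`, where exchanging `x₂`
and `x₃` changes the sign. -/
lemma cm_mul_alternating {Y : Set C} {u : C → C}
    (hu : ∀ x ∈ Y, ∀ y ∈ Y, ∀ z ∈ Y, u x * cm y z = cm y z * u x)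
    (h : ∀ x ∈ Y, ∀ y ∈ Y, ∀ z ∈ Y, u x * cm y z + u y * cm x z = 0)
    {x x₁ x₂ x₃ x₄ : C} (hx : x ∈ Y) (h₁ : x₁ ∈ Y) (h₂ : x₂ ∈ Y) (h₃ : x₃ ∈ Y) (h₄ : x₄ ∈ Y) :
    u x * (cm x₁ x₂ * cm x₃ x₄ + cm x₁ x₃ * cm x₂ x₄) = 0 := by
  have anti : ∀ a b : C, cm a b = -cm b a := fun a b => by unfold cm; noncomm_ring
  have rot : ∀ b ∈ Y, u x * cm x₁ b = cm x x₁ * u b := by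
    intro b hb
    have e := h x hx b hb x₁ h₁
    rw [← hu b hb x hx x₁ h₁, anti x₁ b]
    linear_combination (norm := noncomm_ring) -e
  have e := h x₂ h₂ x₃ h₃ x₄ h₄
  rw [mul_add, ← mul_assoc, ← mul_assoc, rot x₂ h₂, rot x₃ h₃, mul_assoc, mul_assoc, ← mul_add, e,
    mul_zero]

end Modulo

/-- The elements `t` with `s * a * t ∈ I` for all `a`, that is, the right transporter of the right
ideal `s * A` into `I`. -/
def transporter {A : Type*} [Ring A] (I : TwoSidedIdeal A) (s : A) : TwoSidedIdeal A :=
  TwoSidedIdeal.mk' {t | ∀ a, s * a * t ∈ I}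
    (fun a => by simp)
    (fun hx hy a => by rw [mul_add]; exact I.add_mem (hx a) (hy a))
    (fun hx a => by rw [mul_neg]; exact I.neg_mem (hx a))
    (fun {x y} hy a => by
      have := hy (a * x)
      rwa [← mul_assoc, mul_assoc] at this ⊢)
    (fun {x y} hx a => by rw [← mul_assoc]; exact I.mul_mem_right _ _ (hx a))

lemma mem_transporter {A : Type*} [Ring A] {I : TwoSidedIdeal A} {s t : A} :
    t ∈ transporter I s ↔ ∀ a, s * a * t ∈ I := by
  simp [transporter, TwoSidedIdeal.mem_mk']

lemma mk_eq_zero_iff {A : Type*} [Ring A] (I : TwoSidedIdeal A) (a : A) :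
    I.ringCon.mk' a = 0 ↔ a ∈ I := by
  rw [← TwoSidedIdeal.mem_ker, TwoSidedIdeal.ker_ringCon_mk']

theorem stmt_19 {R A : Type*} [CommRing R] [Ring A] [Algebra R A]
    (X : Set A) (hX : Algebra.adjoin R X = ⊤) (S : Set A)
    (I : TwoSidedIdeal A)
    (hI : I = TwoSidedIdeal.span (
      {a | ∃ s ∈ S, ∃ x₁ ∈ X, ∃ x₂ ∈ X, a = cm (cm s x₁) x₂} ∪
      {a | ∃ s ∈ S, ∃ x₁ ∈ X, ∃ x₂ ∈ X, ∃ x₃ ∈ X, a = s * cm (cm x₁ x₂) x₃} ∪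
      {a | ∃ s ∈ S, ∃ x₁ ∈ X, ∃ x₂ ∈ X, ∃ x₃ ∈ X, ∃ x₄ ∈ X,
        a = cm s x₁ * cm (cm x₂ x₃) x₄} ∪
      {a | ∃ s ∈ S, ∃ x₁ ∈ X, ∃ x₂ ∈ X, ∃ x₃ ∈ X,
        a = cm s x₁ * cm x₂ x₃ + cm s x₂ * cm x₁ x₃} ∪
      {a | ∃ s ∈ S, ∃ x₁ ∈ X, ∃ x₂ ∈ X, ∃ x₃ ∈ X, ∃ x₄ ∈ X,
        a = s * (cm x₁ x₂ * cm x₃ x₄ + cm x₁ x₃ * cm x₂ x₄)})) :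
    ∀ s ∈ S, ∀ d₁ ∈ Submonoid.closure X, ∀ d₂ ∈ Submonoid.closure X, ∀ x ∈ X,
      s * cm (cm d₁ d₂) x ∈ I := by
  intro s hs d₁ hd₁ d₂ hd₂ x hx
  have r1 : ∀ x₁ ∈ X, ∀ x₂ ∈ X, cm (cm s x₁) x₂ ∈ I := fun x₁ h₁ x₂ h₂ => by
    rw [hI]; exact TwoSidedIdeal.subset_span
      (Or.inl <| Or.inl <| Or.inl <| Or.inl ⟨s, hs, x₁, h₁, x₂, h₂, rfl⟩)
  have r2 : ∀ x₁ ∈ X, ∀ x₂ ∈ X, ∀ x₃ ∈ X, s * cm (cm x₁ x₂) x₃ ∈ I :=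
    fun x₁ h₁ x₂ h₂ x₃ h₃ => by
    rw [hI]; exact TwoSidedIdeal.subset_span
      (Or.inl <| Or.inl <| Or.inl <| Or.inr ⟨s, hs, x₁, h₁, x₂, h₂, x₃, h₃, rfl⟩)
  have r3 : ∀ x₁ ∈ X, ∀ x₂ ∈ X, ∀ x₃ ∈ X, ∀ x₄ ∈ X, cm s x₁ * cm (cm x₂ x₃) x₄ ∈ I :=
    fun x₁ h₁ x₂ h₂ x₃ h₃ x₄ h₄ => by
    rw [hI]; exact TwoSidedIdeal.subset_span
      (Or.inl <| Or.inl <| Or.inr ⟨s, hs, x₁, h₁, x₂, h₂, x₃, h₃, x₄, h₄, rfl⟩)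
  have r4 : ∀ x₁ ∈ X, ∀ x₂ ∈ X, ∀ x₃ ∈ X, cm s x₁ * cm x₂ x₃ + cm s x₂ * cm x₁ x₃ ∈ I :=
    fun x₁ h₁ x₂ h₂ x₃ h₃ => by
    rw [hI]; exact TwoSidedIdeal.subset_span
      (Or.inl <| Or.inr ⟨s, hs, x₁, h₁, x₂, h₂, x₃, h₃, rfl⟩)
  have r5 : ∀ x₁ ∈ X, ∀ x₂ ∈ X, ∀ x₃ ∈ X, ∀ x₄ ∈ X,
      s * (cm x₁ x₂ * cm x₃ x₄ + cm x₁ x₃ * cm x₂ x₄) ∈ I :=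
    fun x₁ h₁ x₂ h₂ x₃ h₃ x₄ h₄ => by
    rw [hI]; exact TwoSidedIdeal.subset_span
      (Or.inr ⟨s, hs, x₁, h₁, x₂, h₂, x₃, h₃, x₄, h₄, rfl⟩)
  -- Membership in `I` becomes an equation in `A / I`.
  set f := I.ringCon.mk' with hf
  have hf0 : ∀ a, f a = 0 ↔ a ∈ I := mk_eq_zero_iff I
  have hs2 : ∀ x ∈ X, ∀ y ∈ X, f (cm (cm s x) y) = 0 := fun x hx y hy =>
    (hf0 _).2 (r1 x hx y hy)
  have toJ : ∀ t, s * t ∈ I → (∀ x ∈ X, cm s x * t ∈ I) → t ∈ transporter I s :=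
    fun t ht hxt => mem_transporter.2 fun a => (hf0 _).1 <|
      mul_mul_eq_zero_of_gen hX f hs2 ((hf0 _).2 ht) (fun x hx => (hf0 _).2 (hxt x hx)) a
  have q1 : ∀ x₁ ∈ X, ∀ x₂ ∈ X, ∀ x₃ ∈ X, cm (cm x₁ x₂) x₃ ∈ transporter I s :=
    fun x₁ h₁ x₂ h₂ x₃ h₃ => toJ _ (r2 x₁ h₁ x₂ h₂ x₃ h₃)
      fun x hx => r3 x hx x₁ h₁ x₂ h₂ x₃ h₃
  have q2 : ∀ x₁ ∈ X, ∀ x₂ ∈ X, ∀ x₃ ∈ X, ∀ x₄ ∈ X,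
      cm x₁ x₂ * cm x₃ x₄ + cm x₁ x₃ * cm x₂ x₄ ∈ transporter I s := by
    intro x₁ h₁ x₂ h₂ x₃ h₃ x₄ h₄
    refine toJ _ (r5 x₁ h₁ x₂ h₂ x₃ h₃ x₄ h₄) fun x hx => (hf0 _).1 ?_
    have := cm_mul_alternating (Y := Set.image f X) (u := fun c => cm (f s) c)
      (by
        rintro _ ⟨a, ha, rfl⟩ _ ⟨b, -, rfl⟩ _ ⟨c, -, rfl⟩
        simpa only [map_cm] using map_commute_of_adjoin hX f (hs2 a ha) (cm b c))
      (by
        rintro _ ⟨a, ha, rfl⟩ _ ⟨b, hb, rfl⟩ _ ⟨c, hc, rfl⟩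
        simpa only [map_cm, map_add, map_mul] using (hf0 _).2 (r4 a ha b hb c hc))
      ⟨x, hx, rfl⟩ ⟨x₁, h₁, rfl⟩ ⟨x₂, h₂, rfl⟩ ⟨x₃, h₃, rfl⟩ ⟨x₄, h₄, rfl⟩
    simpa only [map_cm, map_add, map_mul] using this
  set g := (transporter I s).ringCon.mk' with hg
  have hg0 : ∀ a, g a = 0 ↔ a ∈ transporter I s := mk_eq_zero_iff _
  have gcl : ∀ d ∈ Submonoid.closure X, g d ∈ Submonoid.closure (Set.image g X) := fun d hd => by
    have := Submonoid.mem_map_of_mem (g : A →* (transporter I s).ringCon.Quotient) hd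
    rwa [MonoidHom.map_mclosure] at this
  have fin : cm (cm d₁ d₂) x ∈ transporter I s := by
    rw [← hg0, map_cm, map_cm]
    refine cm_cm_eq_zero (Y := Set.image g X) ?_ ?_ (gcl d₁ hd₁) (gcl d₂ hd₂) ⟨x, hx, rfl⟩
    · rintro _ ⟨a, ha, rfl⟩ _ ⟨b, hb, rfl⟩ _ ⟨c, hc, rfl⟩
      simpa only [map_cm] using (hg0 _).2 (q1 a ha b hb c hc)
    · rintro _ ⟨a, ha, rfl⟩ _ ⟨b, hb, rfl⟩ _ ⟨c, hc, rfl⟩ _ ⟨d, hd, rfl⟩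
      simpa only [map_cm, map_add, map_mul] using (hg0 _).2 (q2 a ha b hb c hc d hd)
  simpa using mem_transporter.1 fin 1
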